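/- arXiv:1809.02294 — 2 statements merged into one kernel-verified Lean document; each statement's English description precedes it below -/
import Mathlib

section
/- Let γ > 0, let X and ε be independent random variables with X ~ Cauchy(0, γ) and ε ~ Cauchy(0, 1), and let ξ be a nonzero real number. Then the random variable −1/X + ξ·ε is distributed as Cauchy(0, 1/γ + |ξ|). -/
open Real MeasureTheory ProbabilityTheory

/-- The Cauchy distribution with location `x₀` and scale `γ`, given by its density
`x ↦ 1/(π·γ·(1 + ((x − x₀)/γ)^2))` with respect to Lebesgue measure. -/
noncomputable def cauchyDist (x₀ γ : ℝ) : Measure ℝ :=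
  volume.withDensity fun x =>
    ENNReal.ofReal (1 / (Real.pi * γ * (1 + ((x - x₀) / γ) ^ 2)))

lemma cauchyDist_eq (γ : ℝ) (hγ : 0 < γ) :
    cauchyDist 0 γ = cauchyMeasure 0 γ.toNNReal := by
  have h0 : γ.toNNReal ≠ 0 := by simpa using hγ
  rw [cauchyMeasure_of_scale_ne_zero 0 h0, cauchyDist]
  congr 1
  ext x
  rw [cauchyPDF_def, cauchyPDFReal_def', Real.coe_toNNReal γ hγ.le]
  congr 1
  simp [max_eq_left hγ.le]
  ring

lemma fourier_exp_abs (γ : ℝ) (hγ : 0 < γ) (w : ℝ) :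
    FourierTransform.fourier (fun x : ℝ => Complex.exp (-(2 * π * γ * |x| : ℝ))) w
      = ((1 / (π * γ * (1 + ((w - 0) / γ) ^ 2)) : ℝ) : ℂ) := by
  rw [Real.fourier_real_eq_integral_exp_smul]
  have ha : (-(2 * π * γ) - 2 * π * w * Complex.I : ℂ).re < 0 := by
    simp; positivity
  have hb : 0 < (2 * π * γ - 2 * π * w * Complex.I : ℂ).re := by
    simp; positivity
  have e1 : Set.EqOn (fun x : ℝ => Complex.exp (↑(-2 * π * x * w) * Complex.I) •
      Complex.exp (-(2 * π * γ * |x| : ℝ)))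
      (fun x : ℝ => Complex.exp ((-(2 * π * γ) - 2 * π * w * Complex.I) * x)) (Set.Ioi 0) := by
    intro x hx
    simp only [smul_eq_mul, ← Complex.exp_add, abs_of_pos (Set.mem_Ioi.mp hx)]
    congr 1
    push_cast
    ring
  have e2 : Set.EqOn (fun x : ℝ => Complex.exp (↑(-2 * π * x * w) * Complex.I) •
      Complex.exp (-(2 * π * γ * |x| : ℝ)))
      (fun x : ℝ => Complex.exp ((2 * π * γ - 2 * π * w * Complex.I) * x)) (Set.Iic 0) := by
    intro x hx
    simp only [smul_eq_mul, ← Complex.exp_add, abs_of_nonpos (Set.mem_Iic.mp hx)]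
    congr 1
    push_cast
    ring
  rw [← intervalIntegral.integral_Iic_add_Ioi (b := 0)
    ((integrableOn_exp_mul_complex_Iic hb 0).congr_fun e2.symm measurableSet_Iic)
    ((integrableOn_exp_mul_complex_Ioi ha 0).congr_fun e1.symm measurableSet_Ioi),
    setIntegral_congr_fun measurableSet_Iic e2, setIntegral_congr_fun measurableSet_Ioi e1,
    integral_exp_mul_complex_Iic hb, integral_exp_mul_complex_Ioi ha]
  have ha' : (-(2 * π * γ) - 2 * π * w * Complex.I : ℂ) ≠ 0 := by
    intro h; rw [h] at ha; simp at ha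
  have hb' : (2 * π * γ - 2 * π * w * Complex.I : ℂ) ≠ 0 := by
    intro h; rw [h] at hb; simp at hb
  have hc : ((π * γ * (1 + ((w - 0) / γ) ^ 2) : ℝ) : ℂ) ≠ 0 := by
    rw [Complex.ofReal_ne_zero]; positivity
  have hγ' : (γ : ℂ) ≠ 0 := by exact_mod_cast hγ.ne'
  have hd : (γ : ℂ) ^ 2 + w ^ 2 ≠ 0 := by
    have : γ ^ 2 + w ^ 2 ≠ 0 := by positivity
    exact_mod_cast this
  have hpi : (π : ℂ) ≠ 0 := by exact_mod_cast pi_ne_zero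
  have hc2 : ((1 / (π * γ * (1 + ((w - 0) / γ) ^ 2)) : ℝ) : ℂ) = γ / (π * (γ ^ 2 + w ^ 2)) := by
    have : (1 / (π * γ * (1 + ((w - 0) / γ) ^ 2)) : ℝ) = γ / (π * (γ ^ 2 + w ^ 2)) := by
      field_simp
      ring
    rw [this]; push_cast; rfl
  rw [hc2]
  simp only [Complex.ofReal_zero, mul_zero, Complex.exp_zero]
  rw [div_add_div _ _ hb' ha', div_eq_div_iff (mul_ne_zero hb' ha') (mul_ne_zero hpi hd)]
  ring_nf
  simp only [Complex.I_sq]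
  ring

lemma charFun_cauchyDist (γ : ℝ) (hγ : 0 < γ) (t : ℝ) :
    charFun (cauchyDist 0 γ) t = Complex.exp (-(γ * |t| : ℝ)) := by
  have hint : Integrable (fun x : ℝ => 1 / (π * γ * (1 + ((x - 0) / γ) ^ 2))) := by
    convert integrable_cauchyPDFReal 0 (γ := γ.toNNReal) using 2 with x
    rw [cauchyPDFReal_def', Real.coe_toNNReal γ hγ.le]
    simp [max_eq_left hγ.le]
    ring
  set f : ℝ → ℂ := fun x : ℝ => Complex.exp (-(2 * π * γ * |x| : ℝ)) with hf
  have hF : FourierTransform.fourier f =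
      fun w => ((1 / (π * γ * (1 + ((w - 0) / γ) ^ 2)) : ℝ) : ℂ) :=
    funext (fourier_exp_abs γ hγ)
  have hcont : Continuous f := by fun_prop
  have hfi : Integrable f := by
    have hc : (0 : ℝ) < 2 * π * γ := by positivity
    rw [← integrableOn_univ, ← Set.Iic_union_Ioi (a := (0 : ℝ))]
    refine IntegrableOn.union ?_ ?_
    · refine (integrableOn_exp_mul_complex_Iic (a := ((2 * π * γ : ℝ) : ℂ))
        (by rwa [Complex.ofReal_re]) 0).congr_fun ?_ measurableSet_Iic
      intro x hx
      simp only [hf, abs_of_nonpos (Set.mem_Iic.mp hx)]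
      congr 1
      push_cast
      ring
    · refine (integrableOn_exp_mul_complex_Ioi (a := ((-(2 * π * γ) : ℝ) : ℂ))
        (by rw [Complex.ofReal_re]; linarith) 0).congr_fun ?_ measurableSet_Ioi
      intro x hx
      simp only [hf, abs_of_pos (Set.mem_Ioi.mp hx)]
      congr 1
      push_cast
      ring
  have key := congrFun (hcont.fourierInv_fourier_eq hfi (by rw [hF]; exact hint.ofReal))
    (t / (2 * π))
  rw [hF, Real.fourierInv_eq'] at key
  rw [charFun_apply_real, cauchyDist, integral_withDensity_eq_integral_toReal_smul
    (by fun_prop) (by simp)]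
  have h1 : f (t / (2 * π)) = Complex.exp (-(γ * |t| : ℝ)) := by
    simp only [hf]
    congr 3
    rw [abs_div, abs_of_pos (by positivity : (0 : ℝ) < 2 * π)]
    field_simp
  rw [← h1, ← key]
  congr 1
  ext x
  rw [ENNReal.toReal_ofReal (by positivity), Complex.real_smul, smul_eq_mul, mul_comm]
  congr 2
  simp
  field_simp

lemma map_neg_inv_cauchyDist (γ : ℝ) (hγ : 0 < γ) :
    (cauchyDist 0 γ).map (fun x => -(1 / x)) = cauchyDist 0 (1 / γ) := by
  have hm : Measurable (fun x : ℝ => -(1 / x)) := by fun_prop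
  have hs : MeasurableSet ({0}ᶜ : Set ℝ) := (measurableSet_singleton 0).compl
  have himg : (fun x : ℝ => -(1 / x)) '' {0}ᶜ = {0}ᶜ := by
    ext y
    constructor
    · rintro ⟨x, hx, rfl⟩
      simpa using hx
    · intro hy
      exact ⟨-(1 / y), by simpa using hy, by simp⟩
  have hinj : Set.InjOn (fun x : ℝ => -(1 / x)) {0}ᶜ := by
    intro x _ y _ h
    simpa using h
  have hder : ∀ x ∈ ({0}ᶜ : Set ℝ),
      HasDerivWithinAt (fun x : ℝ => -(1 / x)) (1 / x ^ 2) {0}ᶜ x := by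
    intro x hx
    have := ((hasDerivAt_inv (x := x) (by simpa using hx)).neg).hasDerivWithinAt (s := {0}ᶜ)
    have e1 : (fun x : ℝ => -(1 / x)) = -fun y : ℝ => y⁻¹ := by ext y; simp
    have e2 : 1 / x ^ 2 = - -(x ^ 2)⁻¹ := by simp
    rw [e1, e2]
    exact this
  have hae : ∀ g : ℝ → ENNReal, ∫⁻ x in ({0}ᶜ : Set ℝ), g x = ∫⁻ x, g x := by
    intro g
    rw [restrict_compl_singleton]
  ext A hA
  rw [Measure.map_apply hm hA, cauchyDist, cauchyDist, withDensity_apply _ (hm hA),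
    withDensity_apply _ hA, ← lintegral_indicator (hm hA), ← lintegral_indicator hA,
    ← hae, ← hae (A.indicator _)]
  conv_rhs => rw [← himg]
  rw [lintegral_image_eq_lintegral_abs_deriv_mul hs hder hinj]
  refine setLIntegral_congr_fun hs ?_
  intro x hx
  have hx0 : x ≠ 0 := by simpa using hx
  by_cases hxA : -(1 / x) ∈ A
  · simp only [Set.indicator_of_mem hxA, Set.indicator_of_mem (show x ∈ (fun x : ℝ => -(1 / x)) ⁻¹' A from hxA)]
    rw [← ENNReal.ofReal_mul (abs_nonneg _), abs_of_pos (by positivity)]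
    congr 1
    field_simp
    ring
  · simp only [Set.indicator_of_notMem hxA, Set.indicator_of_notMem (show x ∉ (fun x : ℝ => -(1 / x)) ⁻¹' A from hxA),
      mul_zero]

/-- If `X ~ Cauchy(0, γ)` and `ε ~ Cauchy(0, 1)` are independent and `ξ ≠ 0`, then
`−1/X + ξ·ε` is distributed as `Cauchy(0, 1/γ + |ξ|)`. -/
theorem cauchy_transform_distribution
    {Ω : Type*} [MeasureSpace Ω] [IsProbabilityMeasure (ℙ : Measure Ω)]
    (γ : ℝ) (hγ : 0 < γ) (ξ : ℝ) (hξ : ξ ≠ 0)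
    (X ε : Ω → ℝ) (hXm : Measurable X) (hεm : Measurable ε)
    (hindep : IndepFun X ε ℙ)
    (hX : Measure.map X ℙ = cauchyDist 0 γ)
    (hε : Measure.map ε ℙ = cauchyDist 0 1) :
    Measure.map (fun ω => -(1 / X ω) + ξ * ε ω) ℙ = cauchyDist 0 (1 / γ + |ξ|) := by
  have hm : Measurable (fun x : ℝ => -(1 / x)) := by fun_prop
  have hm2 : Measurable (fun x : ℝ => ξ * x) := by fun_prop
  have hpos : 0 < 1 / γ + |ξ| := by positivity
  have hi : IndepFun (fun ω => -(1 / X ω)) (fun ω => ξ * ε ω) ℙ := hindep.comp hm hm2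
  have : IsFiniteMeasure (cauchyDist 0 (1 / γ + |ξ|)) := by
    rw [cauchyDist_eq _ hpos]; infer_instance
  have h1 : Measure.map (fun ω => -(1 / X ω)) ℙ = cauchyDist 0 (1 / γ) := by
    rw [← map_neg_inv_cauchyDist γ hγ, ← hX, Measure.map_map hm hXm]
    rfl
  have hmY : Measurable (fun ω => -(1 / X ω)) := hm.comp hXm
  have hmZ : Measurable (fun ω => ξ * ε ω) := hm2.comp hεm
  have : IsFiniteMeasure (Measure.map (fun ω => -(1 / X ω) + ξ * ε ω) ℙ) := inferInstance
  apply Measure.ext_of_charFun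
  rw [hi.charFun_map_fun_add_eq_mul hmY.aemeasurable hmZ.aemeasurable]
  ext t
  rw [Pi.mul_apply, h1, charFun_map_mul_comp hεm.aemeasurable, hε, charFun_cauchyDist _ (by positivity),
    charFun_cauchyDist _ one_pos, charFun_cauchyDist _ hpos, ← Complex.exp_add, abs_mul]
  congr 1
  push_cast
  ring
end

section
/- Let ξ be a nonzero real number and set γ = (|ξ| + √(ξ² + 4))/2. Then γ is the unique positive solution of γ = 1/γ + |ξ|, and consequently if X and ε are independent with X ~ Cauchy(0, γ) and ε ~ Cauchy(0, 1), then −1/X + ξ·ε has the same distribution as X, and E[log|X|] = log((|ξ| + √(ξ² + 4))/2). -/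
open Real MeasureTheory ProbabilityTheory

lemma cauchy_density_eq {γ : ℝ} (hγ : 0 < γ) (x : ℝ) :
    1 / (Real.pi * γ * (1 + ((x - 0) / γ) ^ 2)) = γ / (Real.pi * (γ ^ 2 + x ^ 2)) := by
  have : γ ^ 2 + x ^ 2 ≠ 0 := by positivity
  have := Real.pi_pos.ne'
  rw [sub_zero]
  field_simp

lemma cauchyDist_eq_s18 {γ : ℝ} (hγ : 0 < γ) : cauchyDist 0 γ =
    volume.withDensity fun x => ENNReal.ofReal (γ / (Real.pi * (γ ^ 2 + x ^ 2))) := by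
  unfold cauchyDist
  simp_rw [cauchy_density_eq hγ]

lemma cauchy_density_measurable (γ : ℝ) :
    Measurable fun x : ℝ => ENNReal.ofReal (γ / (Real.pi * (γ ^ 2 + x ^ 2))) := by
  fun_prop

lemma cauchy_density_integrable {γ : ℝ} (hγ : 0 < γ) :
    Integrable fun x : ℝ => γ / (Real.pi * (γ ^ 2 + x ^ 2)) := by
  have h := (integrable_inv_one_add_sq.comp_div hγ.ne').const_mul (1 / (Real.pi * γ))
  refine h.congr (ae_of_all _ fun x => ?_)
  have := cauchy_density_eq hγ x
  simp only
  rw [← this, sub_zero]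
  simp only [one_div, mul_inv]

lemma cauchy_map_inv {γ c : ℝ} (hγ : 0 < γ) (hc : 0 < c) :
    Measure.map (fun x => -(c / x)) (cauchyDist 0 γ) = cauchyDist 0 (c / γ) := by
  have hf : Measurable fun x : ℝ => -(c / x) := by fun_prop
  rw [cauchyDist_eq_s18 hγ, cauchyDist_eq_s18 (div_pos hc hγ)]
  ext A hA
  rw [Measure.map_apply hf hA, withDensity_apply _ (hf hA), withDensity_apply _ hA]
  have e1 : ((fun x : ℝ => -(c / x)) ⁻¹' A \ {0} : Set ℝ) =ᵐ[volume]
      (fun x : ℝ => -(c / x)) ⁻¹' A := sdiff_null_ae_eq_self (by simp)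
  have e2 : (A \ {0} : Set ℝ) =ᵐ[volume] A := sdiff_null_ae_eq_self (by simp)
  rw [← setLIntegral_congr e1, ← setLIntegral_congr e2]
  have him : A \ {0} = (fun x : ℝ => -(c / x)) '' ((fun x : ℝ => -(c / x)) ⁻¹' A \ {0}) := by
    ext y
    constructor
    · rintro ⟨hy, hy0⟩
      have hy0' : y ≠ 0 := hy0
      have : -(c / (-(c / y))) = y := by field_simp
      refine ⟨-(c / y), ⟨?_, ?_⟩, this⟩
      · simpa [this] using hy
      · simp [hy0', hc.ne']
    · rintro ⟨x, ⟨hx, hx0⟩, rfl⟩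
      have hx0' : x ≠ 0 := hx0
      exact ⟨hx, by simp [hx0', hc.ne']⟩
  rw [him, lintegral_image_eq_lintegral_abs_deriv_mul (f' := fun x => c / x ^ 2)]
  · refine setLIntegral_congr_fun ((hf hA).diff (measurableSet_singleton 0)) ?_
    rintro x ⟨_, hx0⟩
    have hx0' : x ≠ 0 := hx0
    have : γ ^ 2 + x ^ 2 ≠ 0 := by positivity
    have : x ^ 2 + γ ^ 2 ≠ 0 := by positivity
    have := Real.pi_pos.ne'
    simp only
    rw [← ENNReal.ofReal_mul (abs_nonneg _), abs_of_nonneg (by positivity)]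
    congr 1
    field_simp
    try ring
  · exact (hf hA).diff (measurableSet_singleton 0)
  · rintro x ⟨_, hx0⟩
    have hx0' : x ≠ 0 := hx0
    have := ((hasDerivAt_inv hx0').const_mul c).neg
    refine (HasDerivAt.hasDerivWithinAt ?_)
    convert this using 1
    · funext y
      simp [div_eq_mul_inv]
    · rw [div_eq_mul_inv]
      ring
  · rintro x ⟨_, hx0⟩ y ⟨_, hy0⟩ h
    have hx0' : x ≠ 0 := hx0
    have hy0' : y ≠ 0 := hy0
    simp only at h
    field_simp at h
    linarith

lemma cauchy_fourier {γ : ℝ} (hγ : 0 < γ) :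
    Integrable (fun v : ℝ => (Complex.exp (-(2 * Real.pi * γ * |v| : ℝ)) : ℂ)) ∧
    FourierTransform.fourier (fun v : ℝ => (Complex.exp (-(2 * Real.pi * γ * |v| : ℝ)) : ℂ)) =
      fun w : ℝ => ((γ / (Real.pi * (γ ^ 2 + w ^ 2)) : ℝ) : ℂ) := by
  have hp := Real.pi_pos
  have key : ∀ w : ℝ,
      (∀ v ∈ Set.Iic (0:ℝ), Complex.exp (((2 * Real.pi * γ : ℝ) - (2 * Real.pi * w : ℝ) * Complex.I) * v) =
        Complex.exp (↑(-2 * Real.pi * v * w) * Complex.I) *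
          Complex.exp (-(2 * Real.pi * γ * |v| : ℝ))) ∧
      (∀ v ∈ Set.Ioi (0:ℝ), Complex.exp ((-(2 * Real.pi * γ : ℝ) - (2 * Real.pi * w : ℝ) * Complex.I) * v) =
        Complex.exp (↑(-2 * Real.pi * v * w) * Complex.I) *
          Complex.exp (-(2 * Real.pi * γ * |v| : ℝ))) := by
    intro w
    constructor
    · intro v hv
      rw [abs_of_nonpos hv, ← Complex.exp_add]
      congr 1
      push_cast
      ring
    · intro v hv
      rw [abs_of_pos hv, ← Complex.exp_add]
      congr 1
      push_cast
      ring
  have r1 : ∀ w : ℝ, 0 < (((2 * Real.pi * γ : ℝ) - (2 * Real.pi * w : ℝ) * Complex.I : ℂ)).re := by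
    intro w
    rw [Complex.sub_re, Complex.re_ofReal_mul, Complex.I_re, Complex.ofReal_re]
    rw [mul_zero, sub_zero]; positivity
  have r2 : ∀ w : ℝ, ((-(2 * Real.pi * γ : ℝ) - (2 * Real.pi * w : ℝ) * Complex.I : ℂ)).re < 0 := by
    intro w
    rw [Complex.sub_re, Complex.re_ofReal_mul, Complex.I_re, Complex.neg_re, Complex.ofReal_re]
    rw [mul_zero, sub_zero, neg_lt_zero]; positivity
  have i1 : ∀ w : ℝ, IntegrableOn (fun v : ℝ => Complex.exp (↑(-2 * Real.pi * v * w) * Complex.I) *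
          Complex.exp (-(2 * Real.pi * γ * |v| : ℝ))) (Set.Iic 0) := fun w =>
    (integrableOn_exp_mul_complex_Iic (r1 w) 0).congr_fun (key w).1 measurableSet_Iic
  have i2 : ∀ w : ℝ, IntegrableOn (fun v : ℝ => Complex.exp (↑(-2 * Real.pi * v * w) * Complex.I) *
          Complex.exp (-(2 * Real.pi * γ * |v| : ℝ))) (Set.Ioi 0) := fun w =>
    (integrableOn_exp_mul_complex_Ioi (r2 w) 0).congr_fun (key w).2 measurableSet_Ioi
  constructor
  · have := (i1 0).union (i2 0)
    rw [Set.Iic_union_Ioi, integrableOn_univ] at this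
    simpa using this
  · funext w
    rw [Real.fourier_real_eq_integral_exp_smul]
    simp only [smul_eq_mul]
    rw [← intervalIntegral.integral_Iic_add_Ioi (i1 w) (i2 w),
      ← setIntegral_congr_fun measurableSet_Iic (key w).1,
      ← setIntegral_congr_fun measurableSet_Ioi (key w).2,
      integral_exp_mul_complex_Iic (r1 w), integral_exp_mul_complex_Ioi (r2 w)]
    have n1 : ((2 * Real.pi * γ : ℝ) - (2 * Real.pi * w : ℝ) * Complex.I : ℂ) ≠ 0 := by
      intro h; have := r1 w; rw [h] at this; simp at this
    have n2 : (-(2 * Real.pi * γ : ℝ) - (2 * Real.pi * w : ℝ) * Complex.I : ℂ) ≠ 0 := by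
      intro h; have := r2 w; rw [h] at this; simp at this
    have n3 : ((Real.pi * (γ ^ 2 + w ^ 2) : ℝ) : ℂ) ≠ 0 := by
      have : Real.pi * (γ ^ 2 + w ^ 2) ≠ 0 := by positivity
      exact_mod_cast this
    rw [Complex.ofReal_div]
    simp only [Complex.ofReal_zero, mul_zero, Complex.exp_zero]
    rw [div_add_div _ _ n1 n2, div_eq_div_iff (mul_ne_zero n1 n2) n3]
    push_cast
    ring_nf
    simp only [Complex.I_sq]
    ring

lemma cauchy_charFun {γ : ℝ} (hγ : 0 < γ) (t : ℝ) :
    charFun (cauchyDist 0 γ) t = Complex.exp (-(γ * |t| : ℝ)) := by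
  have hp := Real.pi_pos
  obtain ⟨hi, hF⟩ := cauchy_fourier hγ
  have hc : Continuous (fun v : ℝ => (Complex.exp (-(2 * Real.pi * γ * |v| : ℝ)) : ℂ)) := by
    fun_prop
  have hinv := hc.fourierInv_fourier_eq hi (by rw [hF]; exact (cauchy_density_integrable hγ).ofReal)
  rw [hF] at hinv
  have := congrFun hinv (t / (2 * Real.pi))
  rw [Real.fourierInv_eq'] at this
  rw [charFun_apply_real, cauchyDist_eq_s18 hγ,
    integral_withDensity_eq_integral_toReal_smul (cauchy_density_measurable γ)
      (ae_of_all _ fun _ => ENNReal.ofReal_lt_top)]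
  convert this using 1
  · refine integral_congr_ae (ae_of_all _ fun x => ?_)
    simp only
    rw [ENNReal.toReal_ofReal (by positivity), Complex.real_smul, smul_eq_mul, mul_comm]
    congr 3
    have : inner ℝ x (t / (2 * Real.pi)) = x * (t / (2 * Real.pi)) := by simp [mul_comm]
    rw [this, ← Complex.ofReal_mul]
    congr 1
    field_simp
  · congr 3
    rw [abs_div, abs_of_pos (by positivity : 0 < 2 * Real.pi)]
    field_simp

lemma cauchy_log_integrable {γ : ℝ} (hγ : 1 ≤ γ) :
    Integrable (fun x => Real.log |x|) (cauchyDist 0 γ) := by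
  have hγ0 : 0 < γ := by linarith
  have hp := Real.pi_pos
  rw [cauchyDist_eq_s18 hγ0, integrable_withDensity_iff (cauchy_density_measurable γ)
      (ae_of_all _ fun _ => ENNReal.ofReal_lt_top)]
  have h1 : Integrable (Set.indicator (Set.Ioc (-1 : ℝ) 1) fun x => |Real.log x|) := by
    rw [integrable_indicator_iff measurableSet_Ioc]
    have := (intervalIntegral.intervalIntegrable_log' (a := -1) (b := 1))
    rw [intervalIntegrable_iff_integrableOn_Ioc_of_le (by norm_num)] at this
    exact this.abs
  have h2 : Integrable fun x : ℝ => (1 + ‖x‖ ^ 2) ^ (-(3 / 2 : ℝ) / 2) :=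
    integrable_rpow_neg_one_add_norm_sq (by norm_num)
  refine Integrable.mono' ((h1.add (h2.const_mul 2)).const_mul γ) (by fun_prop) (ae_of_all _ fun x => ?_)
  rw [ENNReal.toReal_ofReal (by positivity), Real.log_abs, norm_mul, Real.norm_eq_abs,
    Real.norm_eq_abs, abs_of_nonneg (by positivity : 0 ≤ γ / (Real.pi * (γ ^ 2 + x ^ 2)))]
  simp only [Pi.add_apply, Real.norm_eq_abs, sq_abs]
  have hx : 0 < 1 + x ^ 2 := by positivity
  have hd : γ / (Real.pi * (γ ^ 2 + x ^ 2)) ≤ γ * (1 + x ^ 2)⁻¹ := by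
    rw [div_eq_mul_inv]
    gcongr
    nlinarith [Real.pi_gt_three, sq_nonneg x]
  have hr : 0 < (1 + x ^ 2) ^ (-(3 / 2 : ℝ) / 2) := by positivity
  calc _ ≤ |Real.log x| * (γ * (1 + x ^ 2)⁻¹) := by gcongr
    _ = γ * (|Real.log x| * (1 + x ^ 2)⁻¹) := by ring
    _ ≤ _ := by
      gcongr
      by_cases hm : x ∈ Set.Ioc (-1 : ℝ) 1
      · rw [Set.indicator_of_mem hm]
        have : |Real.log x| * (1 + x ^ 2)⁻¹ ≤ |Real.log x| * 1 := by
          gcongr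
          apply inv_le_one_of_one_le₀
          nlinarith [sq_nonneg x]
        linarith
      · rw [Set.indicator_of_notMem hm, zero_add]
        have hx1 : 1 ≤ |x| := by
          rw [Set.mem_Ioc, not_and_or] at hm
          rw [le_abs]
          rcases hm with h | h
          · right; linarith
          · left; linarith
        have hl : |Real.log x| ≤ 2 * (1 + x ^ 2) ^ (1 / 4 : ℝ) := by
          rw [← Real.log_abs, abs_of_nonneg (Real.log_nonneg hx1)]
          have a1 : 2 * Real.log |x| ≤ Real.log (1 + x ^ 2) := by
            rw [← Nat.cast_ofNat, ← Real.log_pow, sq_abs]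
            have : 0 < x ^ 2 := by rw [← sq_abs]; positivity
            exact Real.log_le_log this (by linarith)
          have a2 := Real.log_le_rpow_div hx.le (by norm_num : (0:ℝ) < 1 / 4)
          linarith
        calc |Real.log x| * (1 + x ^ 2)⁻¹ ≤ 2 * (1 + x ^ 2) ^ (1 / 4 : ℝ) * (1 + x ^ 2)⁻¹ := by gcongr
          _ = _ := by
            rw [← Real.rpow_neg_one, mul_assoc, ← Real.rpow_add hx]
            norm_num

lemma cauchy_log_integral {γ : ℝ} (hγ : 1 ≤ γ) [IsProbabilityMeasure (cauchyDist 0 γ)] :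
    ∫ x, Real.log |x| ∂(cauchyDist 0 γ) = Real.log γ := by
  have hγ0 : 0 < γ := by linarith
  have hi := cauchy_log_integrable hγ
  have hm := cauchy_map_inv hγ0 (by positivity : 0 < γ ^ 2)
  have e : γ ^ 2 / γ = γ := by field_simp
  rw [e] at hm
  have h0 : ∀ᵐ x ∂(cauchyDist 0 γ), x ≠ 0 := by
    unfold cauchyDist
    refine (withDensity_absolutelyContinuous _ _).ae_le ?_
    exact Measure.ae_ne volume 0
  have h : ∫ x, Real.log |x| ∂(cauchyDist 0 γ) =
      ∫ x, (2 * Real.log γ - Real.log |x|) ∂(cauchyDist 0 γ) := by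
    conv_lhs => rw [← hm]
    rw [integral_map (by fun_prop) (by exact (by fun_prop : Measurable fun x : ℝ => Real.log |x|).aestronglyMeasurable)]
    refine integral_congr_ae ?_
    filter_upwards [h0] with x hx
    rw [abs_neg, Real.log_abs, Real.log_abs, Real.log_div (by positivity) hx, Real.log_pow]
    norm_num
  rw [integral_sub (integrable_const _) hi] at h
  simp at h
  simp
  linarith

/-- For `ξ ≠ 0` and `γ = (|ξ| + √(ξ² + 4))/2`: `γ` is the unique positive solution of
`γ = 1/γ + |ξ|`; consequently, if `X ~ Cauchy(0, γ)` and `ε ~ Cauchy(0, 1)` are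
independent, then `−1/X + ξ·ε ~ X` and the Lyapunov exponent is
`E[log |X|] = log((|ξ| + √(ξ² + 4))/2)`. -/
theorem cauchy_lyapunov_exponent
    {Ω : Type*} [MeasureSpace Ω] [IsProbabilityMeasure (ℙ : Measure Ω)]
    (ξ : ℝ) (hξ : ξ ≠ 0)
    (X ε : Ω → ℝ) (hXm : Measurable X) (hεm : Measurable ε)
    (hindep : IndepFun X ε ℙ)
    (hX : Measure.map X ℙ = cauchyDist 0 ((|ξ| + Real.sqrt (ξ ^ 2 + 4)) / 2))
    (hε : Measure.map ε ℙ = cauchyDist 0 1) :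
    (0 < (|ξ| + Real.sqrt (ξ ^ 2 + 4)) / 2 ∧
      (|ξ| + Real.sqrt (ξ ^ 2 + 4)) / 2 =
        1 / ((|ξ| + Real.sqrt (ξ ^ 2 + 4)) / 2) + |ξ| ∧
      ∀ γ' : ℝ, 0 < γ' → γ' = 1 / γ' + |ξ| → γ' = (|ξ| + Real.sqrt (ξ ^ 2 + 4)) / 2) ∧
    Measure.map (fun ω => -(1 / X ω) + ξ * ε ω) ℙ = Measure.map X ℙ ∧
    ∫ ω, Real.log |X ω| ∂ℙ = Real.log ((|ξ| + Real.sqrt (ξ ^ 2 + 4)) / 2) := by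
  have hξ' : 0 < |ξ| := abs_pos.mpr hξ
  set γ := (|ξ| + Real.sqrt (ξ ^ 2 + 4)) / 2 with hγdef
  have hs : Real.sqrt (ξ ^ 2 + 4) ^ 2 = ξ ^ 2 + 4 := Real.sq_sqrt (by positivity)
  have hs0 := Real.sqrt_nonneg (ξ ^ 2 + 4)
  have hγ : 0 < γ := by positivity
  have hquad : γ ^ 2 = 1 + |ξ| * γ := by
    rw [hγdef]
    nlinarith [sq_abs ξ]
  have heq : γ = 1 / γ + |ξ| := by
    field_simp
    linarith
  have hγ1 : 1 ≤ γ := by nlinarith [mul_pos hξ' hγ]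
  have hprob : IsProbabilityMeasure (cauchyDist 0 γ) := by
    rw [← hX]
    exact Measure.isProbabilityMeasure_map hXm.aemeasurable
  refine ⟨⟨hγ, heq, ?_⟩, ?_, ?_⟩
  · intro g hg hgeq
    have hq : g ^ 2 = 1 + |ξ| * g := by
      field_simp at hgeq
      linarith
    have h0 : (g - γ) * (g * γ + 1) = 0 := by linear_combination γ * hq - g * hquad
    have h1 : g * γ + 1 ≠ 0 := by positivity
    have := (mul_eq_zero.mp h0).resolve_right h1
    linarith
  · have m1 : Measurable fun ω => -(1 / X ω) := by fun_prop
    have m2 : Measurable fun ω => ξ * ε ω := by fun_prop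
    have hind : IndepFun (fun ω => -(1 / X ω)) (fun ω => ξ * ε ω) ℙ :=
      hindep.comp (φ := fun x : ℝ => -(1 / x)) (ψ := fun x : ℝ => ξ * x)
        (by fun_prop) (by fun_prop)
    have p1 : Measure.map (fun ω => -(1 / X ω)) ℙ = cauchyDist 0 (1 / γ) := by
      rw [← cauchy_map_inv hγ one_pos, ← hX, Measure.map_map (by fun_prop) hXm]
      rfl
    have p2 : Measure.map (fun ω => ξ * ε ω) ℙ = Measure.map (fun x => ξ * x) (cauchyDist 0 1) := by
      rw [← hε, Measure.map_map (by fun_prop) hεm]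
      rfl
    have hsum := hind.charFun_map_add_eq_mul m1.aemeasurable m2.aemeasurable
    have i1 : IsProbabilityMeasure (Measure.map (fun ω => -(1 / X ω) + ξ * ε ω) ℙ) :=
      Measure.isProbabilityMeasure_map (m1.add m2).aemeasurable
    rw [hX]
    apply Measure.ext_of_charFun
    refine Eq.trans hsum ?_
    funext t
    rw [Pi.mul_apply, p1, p2, charFun_map_mul, cauchy_charFun (by positivity),
      cauchy_charFun one_pos, cauchy_charFun hγ, ← Complex.exp_add, abs_mul]
    congr 1
    rw [← Complex.ofReal_neg, ← Complex.ofReal_neg, ← Complex.ofReal_neg, ← Complex.ofReal_add]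
    congr 1
    linear_combination |t| * heq
  · rw [← cauchy_log_integral hγ1, ← hX, integral_map hXm.aemeasurable (by exact (by fun_prop : Measurable fun x : ℝ => Real.log |x|).aestronglyMeasurable)]
end
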